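/- Let p be a prime and let r, m, e be positive integers with m ≥ r+2 and e ≥ 2. Writing ‖C‖ for the maximum entry and |C| for the minimum entry of a matrix C, one has (m−r−1)^{e−1} · |Y_0| · |U|^{e−2} · |X_0| ≤ c_{p,r,m,e} ≤ (m−r−1)^{e−1} · ‖Y_0‖ · ‖U‖^{e−2} · ‖X_0‖, where U = U(p,r,m) is the determining matrix and X_0, Y_0 are the associated column and row vectors. -/

import Mathlib

/-- `cSeq p r m e` is the number of `m`-tuples `(a_1,…,a_m)` of natural numbers with
`a_1+⋯+a_m = r(p^e−1)` such that `(a_1 mod p^i)+⋯+(a_m mod p^i) ≥ r(p^i−1)+p^i`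
for every `1 ≤ i ≤ e−1`; this is the `e`-th term of the complexity sequence of
the ring `T(V_r(K[x_1,…,x_m]))` of Enescu–Yao. -/
noncomputable def cSeq (p r m e : ℕ) : ℕ :=
  Nat.card {a : Fin m → ℕ // (∑ j, a j = r * (p ^ e - 1)) ∧
    ∀ i, 1 ≤ i → i ≤ e - 1 → r * (p ^ i - 1) + p ^ i ≤ ∑ j, a j % p ^ i}


/-- `Mpm p m i` is the number of `m`-tuples `(b_1,…,b_m)` of integers with
`0 ≤ b_j ≤ p−1` and `b_1+⋯+b_m = i`; it is the coefficient of `t^i` in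
`(1+t+⋯+t^{p−1})^m`. -/
def Mpm (p m : ℕ) (i : ℤ) : ℕ :=
  (Finset.univ.filter (fun b : Fin m → Fin p => (∑ j, ((b j : ℕ) : ℤ)) = i)).card


/-- `Pm m k = binom(k+m−1, m−1)` for `k ≥ 0`, and `0` for `k < 0`. -/
def Pm (m : ℕ) (k : ℤ) : ℕ :=
  if 0 ≤ k then (k.toNat + m - 1).choose (m - 1) else 0


/-- The minimum entry `|U|` of the determining matrix `U(p,r,m)`, whose entries are
`M_{p,m}(r(p−1)+ip−j)` for `1 ≤ i,j ≤ m−r−1`. -/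
noncomputable def minU (p r m : ℕ) : ℕ :=
  sInf {x : ℕ | ∃ i ∈ Finset.Icc 1 (m - r - 1), ∃ j ∈ Finset.Icc 1 (m - r - 1),
    x = Mpm p m ((r : ℤ) * (p - 1) + (i : ℤ) * p - (j : ℤ))}

/-- The maximum entry `‖U‖` of the determining matrix `U(p,r,m)`. -/
noncomputable def maxU (p r m : ℕ) : ℕ :=
  sSup {x : ℕ | ∃ i ∈ Finset.Icc 1 (m - r - 1), ∃ j ∈ Finset.Icc 1 (m - r - 1),
    x = Mpm p m ((r : ℤ) * (p - 1) + (i : ℤ) * p - (j : ℤ))}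

/-- The minimum entry `|X_0|` of the column vector `X_0`, whose entries are
`M_{p,m}(r(p−1)+jp)` for `1 ≤ j ≤ m−r−1`. -/
noncomputable def minX0 (p r m : ℕ) : ℕ :=
  sInf {x : ℕ | ∃ j ∈ Finset.Icc 1 (m - r - 1),
    x = Mpm p m ((r : ℤ) * (p - 1) + (j : ℤ) * p)}

/-- The maximum entry `‖X_0‖` of the column vector `X_0`. -/
noncomputable def maxX0 (p r m : ℕ) : ℕ :=
  sSup {x : ℕ | ∃ j ∈ Finset.Icc 1 (m - r - 1),
    x = Mpm p m ((r : ℤ) * (p - 1) + (j : ℤ) * p)}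

/-- The minimum entry `|Y_0|` of the row vector `Y_0`, whose entries are
`P_m(r(p−1)−n)` for `1 ≤ n ≤ m−r−1`. -/
noncomputable def minY0 (p r m : ℕ) : ℕ :=
  sInf {x : ℕ | ∃ n ∈ Finset.Icc 1 (m - r - 1),
    x = Pm m ((r : ℤ) * (p - 1) - (n : ℤ))}

/-- The maximum entry `‖Y_0‖` of the row vector `Y_0`. -/
noncomputable def maxY0 (p r m : ℕ) : ℕ :=
  sSup {x : ℕ | ∃ n ∈ Finset.Icc 1 (m - r - 1),
    x = Pm m ((r : ℤ) * (p - 1) - (n : ℤ))}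

/-!
Write the sum condition as `a_1 + ⋯ + a_m + r = r * p ^ e` and add in base `p`. The carry out of
the lowest `i` digits is `(∑ j, a_j mod p ^ i + r) / p ^ i`; the conditions defining `c_{p,r,m,e}`
say that it is at least `r + 1`, and it is less than `m` because every residue is at most
`p ^ i - 1`. So each intermediate carry is `r + n` with `1 ≤ n ≤ m - r - 1`. The digits in a column
with carry `r + j` coming in and `r + i` going out sum to `(r + i) * p - (r + j)`, which leaves
`u_{ij}` choices. The lowest column has incoming carry `r` and contributes `X_0`; the part above
`p ^ (e - 1)` is unrestricted and contributes `Y_0`. Hence `c_{p,r,m,e} = Y_0 U^{e-2} X_0`, and the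
bounds follow on comparing `Y_0`, `U` and `X_0` with constant vectors and matrices.
-/

open Finset Matrix

section ConstantBounds

variable {ι R : Type*} [Fintype ι]

theorem dotProduct_le_dotProduct_of_nonneg [Semiring R] [PartialOrder R] [IsOrderedRing R]
    {v v' w w' : ι → R} (hv : 0 ≤ v) (hw : 0 ≤ w) (hvv' : v ≤ v') (hww' : w ≤ w') :
    v ⬝ᵥ w ≤ v' ⬝ᵥ w' :=
  (dotProduct_le_dotProduct_of_nonneg_right hvv' hw).trans
    (dotProduct_le_dotProduct_of_nonneg_left hww' (hv.trans hvv'))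

variable [DecidableEq ι]

theorem const_pow_mulVec_const [CommSemiring R] (u x : R) (k : ℕ) :
    (of fun _ _ : ι => u) ^ k *ᵥ (fun _ => x) = fun _ => (Fintype.card ι * u) ^ k * x := by
  induction k with
  | zero => simp
  | succ k ih =>
    rw [pow_succ', ← mulVec_mulVec, ih]
    ext i
    simp only [mulVec, dotProduct, of_apply, sum_const, card_univ, nsmul_eq_mul]
    ring

theorem const_dotProduct_const_pow_mulVec_const [CommSemiring R] (y u x : R) (k : ℕ) :
    (fun _ : ι => y) ⬝ᵥ ((of fun _ _ : ι => u) ^ k *ᵥ fun _ => x) =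
      Fintype.card ι ^ (k + 1) * y * u ^ k * x := by
  simp only [const_pow_mulVec_const, dotProduct, sum_const, card_univ, nsmul_eq_mul]
  ring

theorem pow_mulVec_nonneg [Semiring R] [PartialOrder R] [IsOrderedRing R] {A : Matrix ι ι R}
    {v : ι → R} (hA : ∀ i j, 0 ≤ A i j) (hv : 0 ≤ v) (k : ℕ) : 0 ≤ A ^ k *ᵥ v := by
  induction k with
  | zero => simpa using hv
  | succ k ih =>
    rw [pow_succ', ← mulVec_mulVec]
    exact fun i => dotProduct_nonneg_of_nonneg (hA i) ih

theorem pow_mulVec_le_pow_mulVec [Semiring R] [PartialOrder R] [IsOrderedRing R]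
    {A B : Matrix ι ι R} {v w : ι → R} (hA : ∀ i j, 0 ≤ A i j) (hv : 0 ≤ v)
    (hAB : ∀ i j, A i j ≤ B i j) (hvw : v ≤ w) (k : ℕ) : A ^ k *ᵥ v ≤ B ^ k *ᵥ w := by
  induction k with
  | zero => simpa using hvw
  | succ k ih =>
    simp only [pow_succ', ← mulVec_mulVec]
    exact fun i =>
      dotProduct_le_dotProduct_of_nonneg (hA i) (pow_mulVec_nonneg hA hv k) (hAB i) ih

variable [CommSemiring R] [PartialOrder R] [IsOrderedRing R] {Y X : ι → R} {U : Matrix ι ι R}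
  {y u x : R}

theorem card_pow_mul_le_dotProduct_pow_mulVec (hy : 0 ≤ y) (hu : 0 ≤ u) (hx : 0 ≤ x)
    (hY : ∀ i, y ≤ Y i) (hU : ∀ i j, u ≤ U i j) (hX : ∀ i, x ≤ X i) (k : ℕ) :
    Fintype.card ι ^ (k + 1) * y * u ^ k * x ≤ Y ⬝ᵥ (U ^ k *ᵥ X) := by
  rw [← const_dotProduct_const_pow_mulVec_const]
  exact dotProduct_le_dotProduct_of_nonneg (fun _ => hy)
    (pow_mulVec_nonneg (fun _ _ => hu) (fun _ => hx) k) hY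
    (pow_mulVec_le_pow_mulVec (fun _ _ => hu) (fun _ => hx) hU hX k)

theorem dotProduct_pow_mulVec_le_card_pow_mul (hY₀ : 0 ≤ Y) (hU₀ : ∀ i j, 0 ≤ U i j) (hX₀ : 0 ≤ X)
    (hY : ∀ i, Y i ≤ y) (hU : ∀ i j, U i j ≤ u) (hX : ∀ i, X i ≤ x) (k : ℕ) :
    Y ⬝ᵥ (U ^ k *ᵥ X) ≤ Fintype.card ι ^ (k + 1) * y * u ^ k * x := by
  rw [← const_dotProduct_const_pow_mulVec_const]
  exact dotProduct_le_dotProduct_of_nonneg hY₀ (pow_mulVec_nonneg hU₀ hX₀ k) hY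
    (pow_mulVec_le_pow_mulVec hU₀ hX₀ hU hX k)

end ConstantBounds

section DeterminingMatrix

/-- The row and column indices of the determining matrix: the possible values of the excess over
`r` of an intermediate carry. -/
abbrev CarryExcess (r m : ℕ) : Type := Icc 1 (m - r - 1)

variable (p r m : ℕ)

/-- The determining matrix `U(p,r,m)`; its `(i, j)` entry counts the columns of digits that turn an
incoming carry `r + j` into an outgoing carry `r + i`. -/
def determiningMatrix : Matrix (CarryExcess r m) (CarryExcess r m) ℕ :=
  of fun i j => Mpm p m ((r : ℤ) * (p - 1) + (i : ℕ) * p - (j : ℕ))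

/-- The column vector `X_0`, the contribution of the lowest column of digits. -/
def columnX0 (j : CarryExcess r m) : ℕ :=
  Mpm p m ((r : ℤ) * (p - 1) + (j : ℕ) * p)

/-- The row vector `Y_0`, the contribution of the unrestricted top part of the entries. -/
def rowY0 (n : CarryExcess r m) : ℕ :=
  Pm m ((r : ℤ) * (p - 1) - (n : ℕ))

variable {r m}

theorem minU_le (i j : CarryExcess r m) : minU p r m ≤ determiningMatrix p r m i j :=
  Nat.sInf_le ⟨i, i.2, j, j.2, rfl⟩

theorem minX0_le (j : CarryExcess r m) : minX0 p r m ≤ columnX0 p r m j :=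
  Nat.sInf_le ⟨j, j.2, rfl⟩

theorem minY0_le (n : CarryExcess r m) : minY0 p r m ≤ rowY0 p r m n :=
  Nat.sInf_le ⟨n, n.2, rfl⟩

theorem le_maxU (i j : CarryExcess r m) : determiningMatrix p r m i j ≤ maxU p r m := by
  refine le_csSup ((Set.finite_range (Function.uncurry (determiningMatrix p r m))).bddAbove.mono ?_)
    ⟨i, i.2, j, j.2, rfl⟩
  rintro _ ⟨i, hi, j, hj, rfl⟩
  exact ⟨(⟨i, hi⟩, ⟨j, hj⟩), rfl⟩

theorem le_maxX0 (j : CarryExcess r m) : columnX0 p r m j ≤ maxX0 p r m := by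
  refine le_csSup ((Set.finite_range (columnX0 p r m)).bddAbove.mono ?_) ⟨j, j.2, rfl⟩
  rintro _ ⟨j, hj, rfl⟩
  exact ⟨⟨j, hj⟩, rfl⟩

theorem le_maxY0 (n : CarryExcess r m) : rowY0 p r m n ≤ maxY0 p r m := by
  refine le_csSup ((Set.finite_range (rowY0 p r m)).bddAbove.mono ?_) ⟨n, n.2, rfl⟩
  rintro _ ⟨n, hn, rfl⟩
  exact ⟨⟨n, hn⟩, rfl⟩

end DeterminingMatrix

section DigitTuples

/-- The choices for one column of a base-`p` addition: `m`-tuples with entries below `K` whose sum,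
together with the incoming carry `s`, is `t`. The bound is `K = p` for a single digit; a bound
exceeding `t - s` imposes nothing and serves the topmost part. -/
def digitTuples (m K s t : ℕ) : Finset (Fin m → ℕ) :=
  {c ∈ Fintype.piFinset fun _ => range K | ∑ j, c j + s = t}

theorem mem_digitTuples {m K s t : ℕ} {c : Fin m → ℕ} :
    c ∈ digitTuples m K s t ↔ (∀ j, c j < K) ∧ ∑ j, c j + s = t := by
  simp [digitTuples]

theorem card_digitTuples_eq_Mpm (p m s t : ℕ) : #(digitTuples m p s t) = Mpm p m (t - s) := by
  refine (card_bij (fun (b : Fin m → Fin p) _ j => (b j : ℕ)) ?_ ?_ ?_).symm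
  · intro b hb
    have hsum : ∑ j, ((b j : ℕ) : ℤ) = t - s := by simpa using hb
    exact mem_digitTuples.2 ⟨fun j => (b j).2, by zify; linarith⟩
  · exact fun b _ b' _ h => funext fun j => Fin.ext (congrFun h j)
  · intro c hc
    obtain ⟨hlt, hsum⟩ := mem_digitTuples.1 hc
    refine ⟨fun j => ⟨c j, hlt j⟩, ?_, rfl⟩
    zify at hsum
    simpa [eq_sub_iff_add_eq] using hsum

theorem card_piAntidiag_univ_eq_choose (ι : Type*) [Fintype ι] [DecidableEq ι] (d : ℕ) :
    #(piAntidiag (univ : Finset ι) d) = (Fintype.card ι + d - 1).choose d := by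
  rw [← card_univ, ← card_finsuppAntidiag_nat_eq_choose, finsuppAntidiag, card_map, card_attach]

theorem digitTuples_eq_piAntidiag {m K s d : ℕ} (hK : d < K) :
    digitTuples m K s (d + s) = piAntidiag univ d := by
  ext c
  simp only [mem_digitTuples, mem_piAntidiag, mem_univ, implies_true, and_true,
    Nat.add_right_cancel_iff]
  refine ⟨And.right, fun hc => ⟨fun j => ?_, hc⟩⟩
  exact ((single_le_sum_of_canonicallyOrdered (mem_univ j)).trans hc.le).trans_lt hK

theorem card_digitTuples_eq_Pm {m K s t : ℕ} (hm : 0 < m) (hK : t < K + s) :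
    #(digitTuples m K s t) = Pm m (t - s) := by
  rcases le_or_gt s t with hst | hst
  · obtain ⟨d, rfl⟩ := Nat.exists_eq_add_of_le' hst
    rw [digitTuples_eq_piAntidiag (by omega), card_piAntidiag_univ_eq_choose, Fintype.card_fin, Pm,
      if_pos (by omega), show (((d + s : ℕ) : ℤ) - s).toNat = d by omega, add_comm m d]
    exact Nat.choose_symm_of_eq_add (by omega)
  · rw [Pm, if_neg (by omega), card_eq_zero, eq_empty_iff_forall_notMem]
    intro c hc
    have hsum := (mem_digitTuples.1 hc).2
    omega

end DigitTuples

section Carry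

theorem sum_eq_sum_mod_add_mul_sum_div {ι : Type*} [Fintype ι] (q : ℕ) (a : ι → ℕ) :
    ∑ j, a j = ∑ j, a j % q + q * ∑ j, a j / q := by
  simp only [mul_sum, ← sum_add_distrib, Nat.mod_add_div]

theorem card_eq_mul_of_mem_iff_mod_mem_and_div_mem {ι : Type*} {q : ℕ} {S L H : Finset (ι → ℕ)}
    (hL : ∀ b ∈ L, ∀ j, b j < q)
    (hS : ∀ a, a ∈ S ↔ (fun j => a j % q) ∈ L ∧ (fun j => a j / q) ∈ H) :
    #S = #L * #H := by
  have mod_recombine {b c : ι → ℕ} (hb : b ∈ L) : (fun j => (b j + q * c j) % q) = b :=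
    funext fun j => by rw [Nat.add_mul_mod_self_left, Nat.mod_eq_of_lt (hL b hb j)]
  have div_recombine {b c : ι → ℕ} (hb : b ∈ L) : (fun j => (b j + q * c j) / q) = c :=
    funext fun j => by
      rw [Nat.add_mul_div_left _ _ (Nat.zero_lt_of_lt (hL b hb j)), Nat.div_eq_of_lt (hL b hb j),
        zero_add]
  rw [← card_product]
  refine card_nbij' (fun a => (fun j => a j % q, fun j => a j / q))
    (fun x j => x.1 j + q * x.2 j) ?_ ?_ ?_ ?_
  · exact fun a ha => mem_product.2 ((hS a).1 ha)
  · rintro ⟨b, c⟩ hbc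
    obtain ⟨hb, hc⟩ := mem_product.1 hbc
    refine (hS _).2 ⟨?_, ?_⟩
    · rwa [mod_recombine hb]
    · rwa [div_recombine hb]
  · exact fun a _ => funext fun j => Nat.mod_add_div (a j) q
  · rintro ⟨b, c⟩ hbc
    obtain ⟨hb, -⟩ := mem_product.1 hbc
    exact Prod.ext (mod_recombine hb) (div_recombine hb)

/-- The carry passed beyond the digits below `q`, a power of the base, when `r` and the entries of
`a` are added, all of `r` entering in the lowest column. -/
def carry {m : ℕ} (q r : ℕ) (a : Fin m → ℕ) : ℕ :=
  (∑ j, a j % q + r) / q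

variable {m q r : ℕ} {a : Fin m → ℕ}

theorem carry_lt (hq : 0 < q) (hrm : r < m) : carry q r a < m := by
  have hsum : ∑ j, a j % q + m ≤ m * q := by
    have := sum_le_sum fun j (_ : j ∈ univ) => Nat.succ_le_of_lt (Nat.mod_lt (a j) hq)
    simpa [sum_add_distrib] using this
  exact (Nat.div_lt_iff_lt_mul hq).2 (by omega)

theorem carry_eq_iff (hq : 0 < q) (hdvd : q ∣ ∑ j, a j + r) {s : ℕ} :
    carry q r a = s ↔ ∑ j, a j % q + r = s * q := by
  rw [sum_eq_sum_mod_add_mul_sum_div q a, add_right_comm] at hdvd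
  exact Nat.div_eq_iff_eq_mul_left hq ((Nat.dvd_add_left (dvd_mul_right _ _)).1 hdvd)

theorem carry_mod_of_dvd {q' : ℕ} (h : q' ∣ q) : carry q' r (fun j => a j % q) = carry q' r a := by
  simp only [carry, Nat.mod_mod_of_dvd _ h]

end Carry

section AdmissibleTuples

/-- The `m`-tuples with entries below `p ^ i * K` for which adding `r` and the entries in base `p`
gives `t * p ^ i`, with all carries out of the `i` lowest columns exceeding `r`. As in
`digitTuples`, `K = p` describes the truncations of a tuple to its lowest digits, while a large `K`
imposes nothing and describes the tuples counted by `cSeq`. -/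
def admissibleTuples (p r m K i t : ℕ) : Finset (Fin m → ℕ) :=
  {a ∈ Fintype.piFinset fun _ => range (p ^ i * K) |
    ∑ j, a j + r = t * p ^ i ∧ ∀ k ∈ Icc 1 i, r < carry (p ^ k) r a}

variable {p r m K i t n : ℕ}

theorem mem_admissibleTuples {a : Fin m → ℕ} :
    a ∈ admissibleTuples p r m K i t ↔ (∀ j, a j < p ^ i * K) ∧
      ∑ j, a j + r = t * p ^ i ∧ ∀ k ∈ Icc 1 i, r < carry (p ^ k) r a := by
  simp [admissibleTuples]

theorem admissibleTuples_zero : admissibleTuples p r m K 0 t = digitTuples m K r t := by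
  ext a
  simp [mem_admissibleTuples, mem_digitTuples]

theorem mem_admissibleTuples_succ_iff_of_sum_mod (hp : 0 < p) (hn : 0 < n) {a : Fin m → ℕ}
    (hmod : ∑ j, a j % p ^ (i + 1) + r = (r + n) * p ^ (i + 1)) :
    a ∈ admissibleTuples p r m K (i + 1) t ↔
      (fun j => a j % p ^ (i + 1)) ∈ admissibleTuples p r m p i ((r + n) * p) ∧
        (fun j => a j / p ^ (i + 1)) ∈ digitTuples m K (r + n) t := by
  have hq : 0 < p ^ (i + 1) := pow_pos hp _
  have carry_top : carry (p ^ (i + 1)) r a = r + n := by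
    rw [carry, hmod, Nat.mul_div_cancel _ hq]
  have mod_lt (j : Fin m) : a j % p ^ (i + 1) < p ^ i * p := Nat.mod_lt _ hq
  have sum_mod : ∑ j, a j % p ^ (i + 1) + r = (r + n) * p * p ^ i := by rw [hmod]; ring
  have lt_iff (j : Fin m) : a j < p ^ (i + 1) * K ↔ a j / p ^ (i + 1) < K := by
    rw [Nat.div_lt_iff_lt_mul hq, mul_comm]
  have sum_iff : ∑ j, a j + r = t * p ^ (i + 1) ↔ ∑ j, a j / p ^ (i + 1) + (r + n) = t := by
    rw [sum_eq_sum_mod_add_mul_sum_div (p ^ (i + 1)) a, add_right_comm, hmod, mul_comm (p ^ _),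
      ← add_mul, Nat.mul_left_inj hq.ne', add_comm]
  have carries_iff : (∀ k ∈ Icc 1 (i + 1), r < carry (p ^ k) r a) ↔
      ∀ k ∈ Icc 1 i, r < carry (p ^ k) r (fun j => a j % p ^ (i + 1)) := by
    rw [← insert_Icc_right_eq_Icc_add_one (by omega), forall_mem_insert, carry_top]
    simp only [lt_add_iff_pos_right, hn, true_and]
    refine forall₂_congr fun k hk => ?_
    rw [carry_mod_of_dvd (pow_dvd_pow p ((mem_Icc.1 hk).2.trans i.le_succ))]
  simp only [mem_admissibleTuples, mem_digitTuples, lt_iff, sum_iff, carries_iff, mod_lt, sum_mod,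
    implies_true, true_and]
  tauto

theorem mem_admissibleTuples_succ_and_carry_eq_iff (hp : 0 < p) (hn : 0 < n) {a : Fin m → ℕ} :
    a ∈ admissibleTuples p r m K (i + 1) t ∧ carry (p ^ (i + 1)) r a = r + n ↔
      (fun j => a j % p ^ (i + 1)) ∈ admissibleTuples p r m p i ((r + n) * p) ∧
        (fun j => a j / p ^ (i + 1)) ∈ digitTuples m K (r + n) t := by
  have hq : 0 < p ^ (i + 1) := pow_pos hp _
  constructor
  · rintro ⟨ha, hcarry⟩
    have hdvd : p ^ (i + 1) ∣ ∑ j, a j + r :=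
      Dvd.intro_left t (mem_admissibleTuples.1 ha).2.1.symm
    exact (mem_admissibleTuples_succ_iff_of_sum_mod hp hn ((carry_eq_iff hq hdvd).1 hcarry)).1 ha
  · intro h
    have hmod : ∑ j, a j % p ^ (i + 1) + r = (r + n) * p ^ (i + 1) := by
      rw [(mem_admissibleTuples.1 h.1).2.1]; ring
    exact ⟨(mem_admissibleTuples_succ_iff_of_sum_mod hp hn hmod).2 h,
      by rw [carry, hmod, Nat.mul_div_cancel _ hq]⟩

theorem card_admissibleTuples_succ (hp : 0 < p) (hrm : r < m) :
    #(admissibleTuples p r m K (i + 1) t) =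
      ∑ n : CarryExcess r m,
        #(digitTuples m K (r + n) t) * #(admissibleTuples p r m p i ((r + n) * p)) := by
  have hq : 0 < p ^ (i + 1) := pow_pos hp _
  have excess_mem : ∀ a ∈ admissibleTuples p r m K (i + 1) t,
      carry (p ^ (i + 1)) r a - r ∈ Icc 1 (m - r - 1) := by
    intro a ha
    have h_gt : r < carry (p ^ (i + 1)) r a :=
      (mem_admissibleTuples.1 ha).2.2 (i + 1) (by simp)
    have h_lt : carry (p ^ (i + 1)) r a < m := carry_lt hq hrm
    rw [mem_Icc]
    omega
  rw [card_eq_sum_card_fiberwise excess_mem, univ_eq_attach, ← sum_attach]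
  refine sum_congr rfl fun n _ => ?_
  have hn : 0 < (n : ℕ) := (mem_Icc.1 n.2).1
  rw [mul_comm]
  refine card_eq_mul_of_mem_iff_mod_mem_and_div_mem (q := p ^ (i + 1))
    (fun b hb => (mem_admissibleTuples.1 hb).1) fun a => ?_
  rw [← mem_admissibleTuples_succ_and_carry_eq_iff hp hn, mem_filter]
  refine and_congr_right fun _ => ?_
  omega

theorem card_admissibleTuples_eq_pow_mulVec (hp : 0 < p) (hrm : r < m) (i : ℕ)
    (n : CarryExcess r m) :
    #(admissibleTuples p r m p i ((r + n) * p)) =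
      (determiningMatrix p r m ^ i *ᵥ columnX0 p r m) n := by
  induction i generalizing n with
  | zero =>
    rw [admissibleTuples_zero, card_digitTuples_eq_Mpm, pow_zero, one_mulVec, columnX0]
    congr 1
    push_cast
    ring
  | succ i ih =>
    rw [card_admissibleTuples_succ hp hrm, pow_succ', ← mulVec_mulVec]
    refine sum_congr rfl fun n' _ => ?_
    have hentry : #(digitTuples m p (r + n') ((r + n) * p)) = determiningMatrix p r m n n' := by
      rw [card_digitTuples_eq_Mpm, determiningMatrix, of_apply]
      congr 1
      push_cast
      ring
    rw [ih, hentry]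

end AdmissibleTuples

section ComplexitySequence

variable {p r m : ℕ}

theorem cSeq_eq_card_admissibleTuples (hp : 0 < p) (i : ℕ) :
    cSeq p r m (i + 1) = #(admissibleTuples p r m (r * p + 1) i (r * p)) := by
  have mul_pred_pow (k : ℕ) : r * (p ^ k - 1) + r = r * p ^ k := by
    rw [← Nat.mul_succ, Nat.succ_eq_add_one, Nat.sub_add_cancel (Nat.pow_pos hp)]
  have sum_iff (a : Fin m → ℕ) :
      ∑ j, a j = r * (p ^ (i + 1) - 1) ↔ ∑ j, a j + r = r * p * p ^ i := by
    rw [← Nat.add_right_cancel_iff (n := r), mul_pred_pow, pow_succ', mul_assoc]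
  have carry_iff (a : Fin m → ℕ) (k : ℕ) :
      r * (p ^ k - 1) + p ^ k ≤ ∑ j, a j % p ^ k ↔ r < carry (p ^ k) r a := by
    rw [← Nat.succ_le_iff, carry, Nat.le_div_iff_mul_le (Nat.pow_pos hp), Nat.succ_mul,
      ← mul_pred_pow k]
    omega
  have lt_of_sum {a : Fin m → ℕ} (ha : ∑ j, a j + r = r * p * p ^ i) (j : Fin m) :
      a j < p ^ i * (r * p + 1) :=
    calc a j ≤ ∑ j, a j := single_le_sum_of_canonicallyOrdered (mem_univ j)
      _ ≤ r * p * p ^ i := by omega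
      _ < p ^ i * (r * p + 1) := by linarith [Nat.pow_pos (n := i) hp]
  rw [cSeq, ← Nat.card_eq_finsetCard]
  refine Nat.card_congr (Equiv.subtypeEquivRight fun a => ?_)
  simp only [mem_admissibleTuples, sum_iff, carry_iff, mem_Icc, and_imp, Nat.add_sub_cancel]
  exact ⟨fun h => ⟨lt_of_sum h.1, h⟩, And.right⟩

theorem cSeq_eq_dotProduct (hp : 0 < p) (hrm : r < m) (k : ℕ) :
    cSeq p r m (k + 2) =
      rowY0 p r m ⬝ᵥ (determiningMatrix p r m ^ k *ᵥ columnX0 p r m) := by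
  rw [cSeq_eq_card_admissibleTuples hp, card_admissibleTuples_succ hp hrm]
  refine sum_congr rfl fun n _ => ?_
  rw [card_admissibleTuples_eq_pow_mulVec hp hrm,
    card_digitTuples_eq_Pm (Nat.zero_lt_of_lt hrm) (by omega), rowY0]
  congr 2
  push_cast
  ring

end ComplexitySequence

theorem stmt_18_general (p r m e : ℕ) (hp : 0 < p) (hm : r + 2 ≤ m) (he : 2 ≤ e) :
    (m - r - 1) ^ (e - 1) * minY0 p r m * minU p r m ^ (e - 2) * minX0 p r m ≤
        cSeq p r m e ∧
    cSeq p r m e ≤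
        (m - r - 1) ^ (e - 1) * maxY0 p r m * maxU p r m ^ (e - 2) * maxX0 p r m := by
  obtain ⟨k, rfl⟩ := Nat.exists_eq_add_of_le' he
  have hcard : m - r - 1 = Fintype.card (CarryExcess r m) := by simp
  rw [hcard, cSeq_eq_dotProduct hp (by omega)]
  exact ⟨card_pow_mul_le_dotProduct_pow_mulVec zero_le zero_le zero_le
      (minY0_le p) (minU_le p) (minX0_le p) k,
    dotProduct_pow_mulVec_le_card_pow_mul zero_le (fun _ _ => zero_le) zero_le
      (le_maxY0 p) (le_maxU p) (le_maxX0 p) k⟩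

/-- the bounds
`(m−r−1)^{e−1}·|Y_0|·|U|^{e−2}·|X_0| ≤ c_{p,r,m,e} ≤ (m−r−1)^{e−1}·‖Y_0‖·‖U‖^{e−2}·‖X_0‖`. -/
theorem stmt_18 (p r m e : ℕ) (hp : p.Prime) (hr : 0 < r) (hm : r + 2 ≤ m)
    (he : 2 ≤ e) :
    (m - r - 1) ^ (e - 1) * minY0 p r m * minU p r m ^ (e - 2) * minX0 p r m ≤
        cSeq p r m e ∧
    cSeq p r m e ≤
        (m - r - 1) ^ (e - 1) * maxY0 p r m * maxU p r m ^ (e - 2) * maxX0 p r m :=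
  stmt_18_general p r m e hp.pos hm he
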